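/- arXiv:1809.10298 — 3 statements merged into one kernel-verified Lean document; each statement's English description precedes it below -/
import Mathlib

section
/- For every odd integer k ≥ 1 and every integer t ≥ 3, every coloring of the edges of the complete graph on (t − 1)·5^{(k−1)/2} + 1 vertices using k colors contains either a rainbow triangle or a monochromatic copy of S_t^+. Together with the matching lower-bound construction, this shows gr_k(K_3 : S_t^+) = (t − 1)·5^{(k−1)/2} + 1 for odd k. -/
open SimpleGraph

/-- `S_t^+`: the star on `t` vertices (center `0`, leaves `1, …, t-1`)
together with one extra edge between the leaves `1` and `2`, forming a triangle. -/
def starPlus (t : ℕ) : SimpleGraph (Fin t) :=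
  SimpleGraph.fromRel (fun a b => a.val = 0 ∨ (a.val = 1 ∧ b.val = 2))

/-- `P_t^+`: the path on `t` vertices `0, 1, …, t-1` (in order) together with
the extra edge between `0` and `2`, forming a triangle at one end. -/
def pathPlus (t : ℕ) : SimpleGraph (Fin t) :=
  SimpleGraph.fromRel (fun a b => b.val = a.val + 1 ∨ (a.val = 0 ∧ b.val = 2))

/-- An edge-coloring `c` of the complete graph on `V` contains a copy of `H`
in color `col`: an injective map of the vertices of `H` into `V` sending every
edge of `H` to a pair colored `col`. -/
def HasCopyIn {V C α : Type*} (c : Sym2 V → C) (col : C) (H : SimpleGraph α) : Prop :=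
  ∃ f : α → V, Function.Injective f ∧ ∀ a b : α, H.Adj a b → c s(f a, f b) = col

/-- An edge-coloring `c` of the complete graph on `V` contains a monochromatic copy of `H`. -/
def HasMonoCopy {V C α : Type*} (c : Sym2 V → C) (H : SimpleGraph α) : Prop :=
  ∃ col : C, HasCopyIn c col H

/-- An edge-coloring `c` of the complete graph on `V` contains a rainbow triangle:
three vertices whose three pairwise edges get pairwise distinct colors. -/
def HasRainbowTriangle {V C : Type*} (c : Sym2 V → C) : Prop :=
  ∃ u v w : V, u ≠ v ∧ u ≠ w ∧ v ≠ w ∧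
    c s(u, v) ≠ c s(u, w) ∧ c s(u, v) ≠ c s(v, w) ∧ c s(u, w) ≠ c s(v, w)

/-- The `k`-color Gallai-Ramsey number `gr_k(K_3 : H)`: the least `n` such that every
`k`-coloring of the edges of `K_n` contains a rainbow triangle or a monochromatic copy of `H`. -/
noncomputable def grK3 (k : ℕ) {α : Type*} (H : SimpleGraph α) : ℕ :=
  sInf {n : ℕ | ∀ c : Sym2 (Fin n) → Fin k, HasRainbowTriangle c ∨ HasMonoCopy c H}

/-- The `2`-color Ramsey number `R(G, H)`: the least `n` such that every red/blue
(`0`/`1`) coloring of the edges of `K_n` contains a red copy of `G` or a blue copy of `H`. -/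
noncomputable def ramsey2 {α β : Type*} (G : SimpleGraph α) (H : SimpleGraph β) : ℕ :=
  sInf {n : ℕ | ∀ c : Sym2 (Fin n) → Fin 2, HasCopyIn c 0 G ∨ HasCopyIn c 1 H}


/-! ### Upper bound -/

/-- Neighbourhood fact: no mono `S_t^+` means large monochromatic neighbourhoods are free of that colour. -/
lemma grs_nbhd {V C : Type*} [DecidableEq V] (c : Sym2 V → C) (t : ℕ) (ht : 3 ≤ t)
    (hm : ¬ HasMonoCopy c (starPlus t)) (v : V) (i : C) (N : Finset V)
    (hv : v ∉ N) (hN : ∀ x ∈ N, c s(v, x) = i) (hcard : t - 1 ≤ N.card)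
    (x y : V) (hx : x ∈ N) (hy : y ∈ N) (hxy : x ≠ y) : c s(x, y) ≠ i := by
  intro hc
  apply hm
  have hyx : y ∈ N.erase x := Finset.mem_erase.2 ⟨hxy.symm, hy⟩
  have h2 : t - 3 ≤ ((N.erase x).erase y).card := by
    rw [Finset.card_erase_of_mem hyx, Finset.card_erase_of_mem hx]; omega
  obtain ⟨M, hM, hMc⟩ := Finset.exists_subset_card_eq h2
  let e : Fin (t - 3) ≃ M := (Finset.equivFinOfCardEq hMc).symm
  have heM : ∀ j, (e j : V) ∈ N ∧ (e j : V) ≠ x ∧ (e j : V) ≠ y := by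
    intro j
    have := hM (e j).2
    simp only [Finset.mem_erase] at this
    tauto
  let f : Fin t → V := fun a =>
    if h0 : a.val = 0 then v else if h1 : a.val = 1 then x else if h2 : a.val = 2 then y
    else e ⟨a.val - 3, by omega⟩
  have hf0 : ∀ a : Fin t, a.val = 0 → f a = v := by intro a h; simp [f, h]
  have hf1 : ∀ a : Fin t, a.val = 1 → f a = x := by intro a h; simp [f, h]
  have hf2 : ∀ a : Fin t, a.val = 2 → f a = y := by intro a h; simp [f, h]
  have hf3 : ∀ a : Fin t, ∀ h : 3 ≤ a.val, f a = e ⟨a.val - 3, by omega⟩ := by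
    intro a h
    have h0 : a.val ≠ 0 := by omega
    have h1 : a.val ≠ 1 := by omega
    have h2 : a.val ≠ 2 := by omega
    simp only [f, h0, h1, h2, dif_neg, not_false_eq_true]
  have hfN : ∀ a : Fin t, a.val ≠ 0 → f a ∈ N := by
    intro a h
    by_cases h1 : a.val = 1
    · rw [hf1 a h1]; exact hx
    by_cases h2 : a.val = 2
    · rw [hf2 a h2]; exact hy
    rw [hf3 a (by omega)]; exact (heM _).1
  have key : ∀ a b : Fin t, a.val < b.val → f a ≠ f b := by
    intro a b hab h
    by_cases h0 : a.val = 0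
    · rw [hf0 a h0] at h
      exact hv (h ▸ hfN b (by omega))
    by_cases h1 : a.val = 1
    · rw [hf1 a h1] at h
      by_cases h2 : b.val = 2
      · rw [hf2 b h2] at h; exact hxy h
      · rw [hf3 b (by omega)] at h; exact (heM _).2.1 h.symm
    by_cases h2 : a.val = 2
    · rw [hf2 a h2, hf3 b (by omega)] at h; exact (heM _).2.2 h.symm
    rw [hf3 a (by omega), hf3 b (by omega)] at h
    have := e.injective (Subtype.ext h)
    simp only [Fin.mk.injEq] at this
    omega
  refine ⟨i, f, ?_, ?_⟩
  · intro a b h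
    rcases lt_trichotomy a.val b.val with hl | hl | hl
    · exact absurd h (key a b hl)
    · exact Fin.ext hl
    · exact absurd h.symm (key b a hl)
  · have main : ∀ a b : Fin t, a ≠ b → (a.val = 0 ∨ (a.val = 1 ∧ b.val = 2)) →
        c s(f a, f b) = i := by
      intro a b hab h
      rcases h with h | ⟨h1, h2⟩
      · rw [hf0 a h]
        apply hN
        apply hfN
        intro hb
        exact hab (Fin.ext (h.trans hb.symm))
      · rw [hf1 a h1, hf2 b h2]; exact hc
    intro a b hab
    rw [starPlus, SimpleGraph.fromRel_adj] at hab
    rcases hab with ⟨hne, h | h⟩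
    · exact main a b hne h
    · rw [Sym2.eq_swap]; exact main b a hne.symm h

/-- The graph on `X` of edges coloured neither `r` nor `b`. -/
def grsG {V C : Type*} (c : Sym2 V → C) (X : Finset V) (r b : C) : SimpleGraph V where
  Adj x y := x ≠ y ∧ x ∈ X ∧ y ∈ X ∧ c s(x, y) ≠ r ∧ c s(x, y) ≠ b
  symm := ⟨by
    rintro x y ⟨h1, h2, h3, h4⟩
    rw [Sym2.eq_swap] at h4
    exact ⟨h1.symm, h3, h2, h4⟩⟩
  loopless := ⟨fun x h => h.1 rfl⟩

lemma grs_cross {V C : Type*} (c : Sym2 V → C) (X : Finset V) (r b : C) (x y : V)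
    (hx : x ∈ X) (hy : y ∈ X) (h : ¬ (grsG c X r b).Reachable x y) :
    c s(x, y) = r ∨ c s(x, y) = b := by
  by_contra! hc
  apply h
  by_cases hxy : x = y
  · subst hxy; exact SimpleGraph.Reachable.refl _
  · exact SimpleGraph.Adj.reachable (show (grsG c X r b).Adj x y from ⟨hxy, hx, hy, hc⟩)

lemma grs_homog {V C : Type*} (c : Sym2 V → C) (hr : ¬ HasRainbowTriangle c)
    (X : Finset V) (r b : C) (x x' y : V) (hy : y ∈ X)
    (hxx : (grsG c X r b).Reachable x x') (h : ¬ (grsG c X r b).Reachable x y) :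
    c s(x, y) = c s(x', y) := by
  obtain ⟨w⟩ := hxx
  induction w with
  | nil => rfl
  | @cons u w z hadj p ih =>
    have hw : ¬ (grsG c X r b).Reachable w y := fun hh => h (hadj.reachable.trans hh)
    rw [← ih hw]
    have h1 := grs_cross c X r b u y hadj.2.1 hy h
    have h2 := grs_cross c X r b w y hadj.2.2.1 hy hw
    obtain ⟨a1, a2, a3, a4, a5⟩ := hadj
    by_contra hne
    apply hr
    refine ⟨u, w, y, a1, ?_, ?_, ?_, ?_, hne⟩
    · rintro rfl; exact h (SimpleGraph.Reachable.refl _)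
    · rintro rfl; exact hw (SimpleGraph.Reachable.refl _)
    · rcases h1 with h1 | h1 <;> rw [h1] <;> assumption
    · rcases h2 with h2 | h2 <;> rw [h2] <;> assumption

lemma grs_reach {V C : Type*} [DecidableEq V] (c : Sym2 V → C) (X : Finset V) (r b : C) (v : V)
    (x : V) (hxv : x ≠ v)
    (h : (grsG c (insert v X) r b).Reachable x v) :
    ∃ x', (grsG c X r b).Reachable x x' ∧ x' ∈ X ∧ c s(x', v) ≠ r ∧ c s(x', v) ≠ b := by
  generalize hG : grsG c (insert v X) r b = G at h
  have hadjG : ∀ a d, G.Adj a d → (grsG c (insert v X) r b).Adj a d := by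
    intro a d h; rw [hG]; exact h
  clear hG
  obtain ⟨w⟩ := h
  induction w with
  | nil => exact absurd rfl hxv
  | @cons u w z hadj p ih =>
    obtain ⟨a1, a2, a3, a4⟩ := hadjG _ _ hadj
    have hu : u ∈ X := (Finset.mem_insert.1 a2).resolve_left hxv
    by_cases hw : w = z
    · subst hw
      exact ⟨u, SimpleGraph.Reachable.refl _, hu, a4⟩
    · obtain ⟨x', h1, h2⟩ := ih hw hadjG
      have hwX : w ∈ X := (Finset.mem_insert.1 a3).resolve_left hw
      have : (grsG c X r b).Adj u w := ⟨a1, hu, hwX, a4⟩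
      exact ⟨x', this.reachable.trans h1, h2⟩

/-- Gallai's structure theorem. -/
lemma grs_gallai {V C : Type*} [DecidableEq V] (c : Sym2 V → C) (hr : ¬ HasRainbowTriangle c)
    (X : Finset V) (hX : 2 ≤ X.card) :
    ∃ r b : C, ∃ x ∈ X, ∃ y ∈ X, ¬ (grsG c X r b).Reachable x y := by
  have tri : ∀ u v w : V, u ≠ v → u ≠ w → v ≠ w →
      c s(u, v) ≠ c s(u, w) → c s(u, v) ≠ c s(v, w) → c s(u, w) = c s(v, w) := by
    intro u v w h1 h2 h3 h4 h5
    by_contra h6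
    exact hr ⟨u, v, w, h1, h2, h3, h4, h5, h6⟩
  induction X using Finset.induction_on with
  | empty => simp at hX
  | @insert v X hv ih =>
    rw [Finset.card_insert_of_notMem hv] at hX
    obtain ⟨x₀, hx₀⟩ : X.Nonempty := Finset.card_pos.1 (by omega)
    by_cases h2c : ∃ r b : C, ∀ x ∈ X, c s(v, x) = r ∨ c s(v, x) = b
    · obtain ⟨r, b, h⟩ := h2c
      refine ⟨r, b, v, by simp, x₀, by simp [hx₀], ?_⟩
      rintro ⟨w⟩
      cases w with
      | nil => exact hv hx₀
      | cons hadj p =>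
        obtain ⟨a1, a2, a3, a4, a5⟩ := hadj
        have := h _ ((Finset.mem_insert.1 a3).resolve_left a1.symm)
        tauto
    · push Not at h2c
      have hXc : 2 ≤ X.card := by
        by_contra hlt
        have h1 : X.card = 1 := by omega
        obtain ⟨a, ha⟩ := Finset.card_eq_one.1 h1
        obtain ⟨x, hx, h3, h4⟩ := h2c (c s(v, a)) (c s(v, a))
        rw [ha, Finset.mem_singleton] at hx
        subst hx; exact h3 rfl
      obtain ⟨r, b, x, hx, y, hy, hxy⟩ := ih hXc
      by_contra hcon
      push Not at hcon
      have hall := hcon r b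
      have hne : ∀ z ∈ X, z ≠ v := by rintro z hz rfl; exact hv hz
      have hesc : ∀ z ∈ X, ∃ z', (grsG c X r b).Reachable z z' ∧ z' ∈ X ∧
          c s(z', v) ≠ r ∧ c s(z', v) ≠ b := fun z hz =>
        grs_reach c X r b v z (hne z hz) (hall z (by simp [hz]) v (by simp))
      have hoth : ∀ z, ∃ u ∈ X, ¬ (grsG c X r b).Reachable z u := by
        intro z
        by_cases h : (grsG c X r b).Reachable z x
        · exact ⟨y, hy, fun h' => hxy (h.symm.trans h')⟩
        · exact ⟨x, hx, h⟩
      -- colour r or b edges at v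
      have hstar : ∀ z ∈ X, (c s(v, z) = r ∨ c s(v, z) = b) → ∀ u ∈ X,
          ¬ (grsG c X r b).Reachable z u → c s(z, u) = c s(v, z) := by
        intro z hz hcz u hu hzu
        obtain ⟨u', h1, h2, h3, h4⟩ := hesc u hu
        have hzu' : ¬ (grsG c X r b).Reachable z u' := fun h => hzu (h.trans h1.symm)
        have hh := grs_homog c hr X r b u u' z hz h1 (fun h => hzu h.symm)
        rw [Sym2.eq_swap, hh]
        have hcr := grs_cross c X r b u' z h2 hz (fun h => hzu' h.symm)
        have hne' : z ≠ u' := by rintro rfl; exact hzu' (SimpleGraph.Reachable.refl _)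
        apply tri u' v z (hne _ h2) hne'.symm (hne _ hz).symm
        · rcases hcr with h | h <;> rw [h] <;> assumption
        · rcases hcz with h | h <;> rw [h] <;> assumption
      -- edges at v with other colours all share a colour
      have hg1 : ∀ z ∈ X, ∀ u ∈ X, ¬ (grsG c X r b).Reachable z u →
          c s(z, v) ≠ r → c s(z, v) ≠ b → c s(u, v) ≠ r → c s(u, v) ≠ b →
          c s(z, v) = c s(u, v) := by
        intro z hz u hu hzu h1 h2 h3 h4
        have hcr := grs_cross c X r b z u hz hu hzu
        have hne' : z ≠ u := by rintro rfl; exact hzu (SimpleGraph.Reachable.refl _)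
        apply tri z u v hne' (hne _ hz) (hne _ hu)
        · rcases hcr with h | h <;> rw [h] <;> exact Ne.symm (by assumption)
        · rcases hcr with h | h <;> rw [h] <;> exact Ne.symm (by assumption)
      have hg : ∀ z ∈ X, ∀ u ∈ X, c s(z, v) ≠ r → c s(z, v) ≠ b → c s(u, v) ≠ r →
          c s(u, v) ≠ b → c s(z, v) = c s(u, v) := by
        intro z hz u hu h1 h2 h3 h4
        by_cases hzu : (grsG c X r b).Reachable z u
        · obtain ⟨w, hw, hzw⟩ := hoth z
          obtain ⟨w', k1, k2, k3, k4⟩ := hesc w hw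
          have e1 := hg1 z hz w' k2 (fun h => hzw (h.trans k1.symm)) h1 h2 k3 k4
          have e2 := hg1 u hu w' k2 (fun h => hzw ((hzu.trans h).trans k1.symm)) h3 h4 k3 k4
          rw [e1, e2]
        · exact hg1 z hz u hu hzu h1 h2 h3 h4
      obtain ⟨x', -, hx', g1, g2⟩ := hesc x hx
      have hcases : ∀ z ∈ X, c s(v, z) = r ∨ c s(v, z) = b ∨ c s(v, z) = c s(x', v) := by
        intro z hz
        by_contra! hh
        obtain ⟨q1, q2, q3⟩ := hh
        rw [Sym2.eq_swap] at q1 q2 q3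
        exact q3 (hg z hz x' hx' q1 q2 g1 g2)
      obtain ⟨p, hp, p1, p2⟩ := h2c r (c s(x', v))
      obtain ⟨q, hq, q1, q2⟩ := h2c b (c s(x', v))
      have hpb : c s(v, p) = b := by have := hcases p hp; tauto
      have hqr : c s(v, q) = r := by have := hcases q hq; tauto
      have hrb : r ≠ b := by rw [← hpb]; exact p1.symm
      by_cases hpq : (grsG c X r b).Reachable p q
      · obtain ⟨w, hw, hpw⟩ := hoth p
        have e1 := hstar p hp (Or.inr hpb) w hw hpw
        have e2 := hstar q hq (Or.inl hqr) w hw (fun h => hpw (hpq.trans h))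
        have e3 := grs_homog c hr X r b p q w hw hpq hpw
        exact hrb (by rw [← hqr, ← e2, ← e3, e1, hpb])
      · have e1 := hstar p hp (Or.inr hpb) q hq hpq
        have e2 := hstar q hq (Or.inl hqr) p hp (fun h => hpq h.symm)
        rw [Sym2.eq_swap] at e2
        exact hrb (by rw [← hqr, ← e2, e1, hpb])

lemma grs_gallai' {V C : Type*} [DecidableEq V] (c : Sym2 V → C) (hr : ¬ HasRainbowTriangle c)
    (X : Finset V) (hX : 2 ≤ X.card) :
    ∃ (r b : C) (P : V → V → Prop), Equivalence P ∧ (∃ x ∈ X, ∃ y ∈ X, ¬ P x y) ∧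
      (∀ x ∈ X, ∀ y ∈ X, ¬ P x y → c s(x, y) = r ∨ c s(x, y) = b) ∧
      (∀ x x' y, y ∈ X → P x x' → ¬ P x y → c s(x, y) = c s(x', y)) := by
  obtain ⟨r, b, h⟩ := grs_gallai c hr X hX
  refine ⟨r, b, (grsG c X r b).Reachable,
    ⟨fun x => SimpleGraph.Reachable.refl _, fun h => h.symm, fun h h' => h.trans h'⟩, h,
    fun x hx y hy => grs_cross c X r b x y hx hy,
    fun x x' y hy => grs_homog c hr X r b x x' y hy⟩

/-- The extremal function. -/
def grsH (t : ℕ) : ℕ → ℕ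
  | 0 => 1
  | 1 => t - 1
  | 2 => max (2 * (t - 1)) 5
  | (k + 3) => 5 * grsH t (k + 1)

lemma grsH_odd (t m : ℕ) : grsH t (2 * m + 1) = (t - 1) * 5 ^ m := by
  induction m with
  | zero => simp [grsH]
  | succ m ih =>
    show grsH t (2 * m + 3) = _
    rw [grsH, ih, pow_succ]; ring

lemma grsH_facts (t : ℕ) (ht : 3 ≤ t) (k : ℕ) :
    t - 1 ≤ grsH t (k + 1) ∧ t - 1 ≤ grsH t (k + 2) ∧
    2 * grsH t (k + 2) ≤ 5 * grsH t (k + 1) ∧ 2 * grsH t (k + 1) ≤ grsH t (k + 2) := by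
  induction k with
  | zero => simp only [grsH]; omega
  | succ k ih =>
    show t - 1 ≤ grsH t (k + 2) ∧ t - 1 ≤ grsH t (k + 3) ∧
      2 * grsH t (k + 3) ≤ 5 * grsH t (k + 2) ∧ 2 * grsH t (k + 2) ≤ grsH t (k + 3)
    have : grsH t (k + 3) = 5 * grsH t (k + 1) := by rw [grsH]
    omega

lemma grs_two {V C : Type*} [DecidableEq V] [DecidableEq C] (c : Sym2 V → C) (t : ℕ) (ht : 3 ≤ t)
    (hm : ¬ HasMonoCopy c (starPlus t)) (r b : C) (X : Finset V)
    (hX : ∀ x ∈ X, ∀ y ∈ X, x ≠ y → c s(x, y) = r ∨ c s(x, y) = b) :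
    X.card ≤ max (2 * (t - 1)) 5 := by
  have deg : ∀ i j : C, (∀ x ∈ X, ∀ y ∈ X, x ≠ y → c s(x, y) = i ∨ c s(x, y) = j) →
      ∀ v ∈ X, ((X.erase v).filter (fun x => c s(v, x) = i)).card ≤ t - 1 := by
    intro i j hij v hv
    by_contra! hlt
    set N := (X.erase v).filter (fun x => c s(v, x) = i) with hN
    have hNX : ∀ x ∈ N, x ∈ X := fun x hx => by simp [hN] at hx; tauto
    have hno : ∀ x ∈ N, ∀ y ∈ N, x ≠ y → c s(x, y) = j := by
      intro x hx y hy hxy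
      have h1 := grs_nbhd c t ht hm v i N (by simp [hN])
        (fun x hx => by simp [hN] at hx; tauto) (by omega) x y hx hy hxy
      exact (hij x (hNX x hx) y (hNX y hy) hxy).resolve_left h1
    obtain ⟨u, hu⟩ : N.Nonempty := Finset.card_pos.1 (by omega)
    have hc : (N.erase u).card = N.card - 1 := Finset.card_erase_of_mem hu
    obtain ⟨x, hx, y, hy, hxy⟩ := Finset.one_lt_card.1 (show 1 < (N.erase u).card by omega)
    have := grs_nbhd c t ht hm u j (N.erase u) (by simp)
      (fun x hx => hno u hu x (Finset.mem_of_mem_erase hx) (Finset.ne_of_mem_erase hx).symm)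
      (by omega) x y hx hy hxy
    exact this (hno x (Finset.mem_of_mem_erase hx) y (Finset.mem_of_mem_erase hy) hxy)
  have hX' : ∀ x ∈ X, ∀ y ∈ X, x ≠ y → c s(x, y) = b ∨ c s(x, y) = r :=
    fun x hx y hy h => (hX x hx y hy h).symm
  by_contra! hlt
  have hsum : ∀ v ∈ X, X.card ≤ 1 + ((X.erase v).filter (fun x => c s(v, x) = r)).card +
      ((X.erase v).filter (fun x => c s(v, x) = b)).card := by
    intro v hv
    have h1 : (X.erase v).card = X.card - 1 := Finset.card_erase_of_mem hv
    have h2 : X.erase v ⊆ (X.erase v).filter (fun x => c s(v, x) = r) ∪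
        (X.erase v).filter (fun x => c s(v, x) = b) := by
      intro x hx
      have := hX v hv x (Finset.mem_of_mem_erase hx) (Finset.ne_of_mem_erase hx).symm
      rw [Finset.mem_union, Finset.mem_filter, Finset.mem_filter]
      tauto
    have h3 := (Finset.card_le_card h2).trans (Finset.card_union_le _ _)
    omega
  obtain ⟨v, hv⟩ : X.Nonempty := Finset.card_pos.1 (by omega)
  have d1 := deg r b hX v hv
  have d2 := deg b r hX' v hv
  have d3 := hsum v hv
  have ht4 : 4 ≤ t := by omega
  set N := (X.erase v).filter (fun x => c s(v, x) = r) with hN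
  have hNX : ∀ x ∈ N, x ∈ X := fun x hx => by simp [hN] at hx; tauto
  have hno : ∀ x ∈ N, ∀ y ∈ N, x ≠ y → c s(x, y) = b := by
    intro x hx y hy hxy
    have h1 := grs_nbhd c t ht hm v r N (by simp [hN])
      (fun x hx => by simp [hN] at hx; tauto) (by omega) x y hx hy hxy
    exact (hX x (hNX x hx) y (hNX y hy) hxy).resolve_left h1
  obtain ⟨u, hu⟩ : N.Nonempty := Finset.card_pos.1 (by omega)
  have huX := hNX u hu
  have e1 := deg r b hX u huX
  have e3 := hsum u huX
  have hc : (N.erase u).card = N.card - 1 := Finset.card_erase_of_mem hu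
  obtain ⟨x, hx, y, hy, hxy⟩ := Finset.one_lt_card.1 (show 1 < (N.erase u).card by omega)
  have hmem : ∀ x ∈ N.erase u, x ∈ (X.erase u).filter (fun x => c s(u, x) = b) := by
    intro x hx
    obtain ⟨k1, k2⟩ := Finset.mem_erase.1 hx
    rw [Finset.mem_filter, Finset.mem_erase]
    exact ⟨⟨k1, hNX x k2⟩, hno u hu x k2 k1.symm⟩
  have := grs_nbhd c t ht hm u b ((X.erase u).filter (fun x => c s(u, x) = b)) (by simp)
      (fun x hx => by simp at hx; tauto)
      (by omega) x y (hmem x hx) (hmem y hy) hxy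
  exact this (hno x (Finset.mem_of_mem_erase hx) y (Finset.mem_of_mem_erase hy) hxy)

open Classical in
lemma grs_upper {V C : Type*} (c : Sym2 V → C) (t : ℕ) (ht : 3 ≤ t)
    (hr : ¬ HasRainbowTriangle c) (hm : ¬ HasMonoCopy c (starPlus t)) (k : ℕ) :
    ∀ (K : Finset C) (X : Finset V), K.card = k + 1 →
      (∀ x ∈ X, ∀ y ∈ X, x ≠ y → c s(x, y) ∈ K) → X.card ≤ grsH t (k + 1) := by
  induction k using Nat.strong_induction_on with
  | _ k ih =>
  intro K X hK hX
  match k, ih, hK with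
  | 0, ih, hK =>
    obtain ⟨i, rfl⟩ := Finset.card_eq_one.1 hK
    simp only [Finset.mem_singleton] at hX
    by_contra! hlt
    simp only [grsH] at hlt
    obtain ⟨v, hv⟩ : X.Nonempty := Finset.card_pos.1 (by omega)
    have hc : (X.erase v).card = X.card - 1 := Finset.card_erase_of_mem hv
    obtain ⟨x, hx, y, hy, hxy⟩ := Finset.one_lt_card.1 (show 1 < (X.erase v).card by omega)
    exact grs_nbhd c t ht hm v i (X.erase v) (by simp)
      (fun x hx => hX v hv x (Finset.mem_of_mem_erase hx) (Finset.ne_of_mem_erase hx).symm)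
      (by omega) x y hx hy hxy
      (hX x (Finset.mem_of_mem_erase hx) y (Finset.mem_of_mem_erase hy) hxy)
  | 1, ih, hK =>
    obtain ⟨r, b, -, rfl⟩ := Finset.card_eq_two.1 hK
    simp only [Finset.mem_insert, Finset.mem_singleton] at hX
    exact grs_two c t ht hm r b X hX
  | k + 2, ih, hK =>
    show X.card ≤ grsH t (k + 3)
    have hHeq : grsH t (k + 3) = 5 * grsH t (k + 1) := by rw [grsH]
    obtain ⟨f1, f2, f3, f4⟩ := grsH_facts t ht k
    rw [hHeq]
    by_cases hX2 : X.card < 2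
    · omega
    obtain ⟨r, b, P, hP, ⟨x₁, hx₁, y₁, hy₁, hxy₁⟩, hcr, hho⟩ :=
      grs_gallai' c hr X (by omega)
    have hoth : ∀ z, ∃ u ∈ X, ¬ P z u := by
      intro z
      by_cases h : P z x₁
      · exact ⟨y₁, hy₁, fun h' => hxy₁ (hP.trans (hP.symm h) h')⟩
      · exact ⟨x₁, hx₁, h⟩
    -- one-colour cut
    have hcut : ∀ (i : C) (v : V), v ∈ X → (∀ u ∈ X, ¬ P v u → c s(v, u) = i) →
        X.card ≤ 5 * grsH t (k + 1) := by
      intro i v hv hvi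
      obtain ⟨w, hw, hvw⟩ := hoth v
      have hne : v ≠ w := by rintro rfl; exact hvw (hP.refl _)
      have hiK : i ∈ K := by rw [← hvi w hw hvw]; exact hX v hv w hw hne
      have hKe : (K.erase i).card = (k + 1) + 1 := by
        rw [Finset.card_erase_of_mem hiK]; omega
      have hside : ∀ (A : Finset V) (z : V), A ⊆ X → z ∉ A → (∀ x ∈ A, c s(z, x) = i) →
          A.card ≤ grsH t (k + 2) := by
        intro A z hA hz hzA
        by_cases hs : A.card < t - 1
        · omega
        apply ih (k + 1) (by omega) (K.erase i) A hKe
        intro x hx y hy hxy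
        rw [Finset.mem_erase]
        exact ⟨grs_nbhd c t ht hm z i A hz hzA (by omega) x y hx hy hxy,
          hX x (hA hx) y (hA hy) hxy⟩
      have s1 := hside (X.filter (fun x => P v x)) w (Finset.filter_subset _ _)
        (by simp [hvw]) (by
          intro x hx
          rw [Finset.mem_filter] at hx
          rw [Sym2.eq_swap, ← hho v x w hw hx.2 hvw]
          exact hvi w hw hvw)
      have s2 := hside (X.filter (fun x => ¬ P v x)) v (Finset.filter_subset _ _)
        (by simp [hP.refl v]) (by
          intro x hx
          rw [Finset.mem_filter] at hx
          exact hvi x hx.1 hx.2)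
      have := Finset.card_filter_add_card_filter_not (s := X) (fun x => P v x)
      omega
    by_cases hrc : ∃ v ∈ X, ∀ u ∈ X, ¬ P v u → c s(v, u) = r
    · obtain ⟨v, hv, h⟩ := hrc; exact hcut r v hv h
    by_cases hbc : ∃ v ∈ X, ∀ u ∈ X, ¬ P v u → c s(v, u) = b
    · obtain ⟨v, hv, h⟩ := hbc; exact hcut b v hv h
    push Not at hrc hbc
    -- parts are small
    have hpart : ∀ v ∈ X, (X.filter (fun x => P v x)).card ≤ grsH t (k + 1) := by
      intro v hv
      by_cases hs : (X.filter (fun x => P v x)).card < t - 1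
      · omega
      obtain ⟨p, hp, hvp, hp'⟩ := hrc v hv
      obtain ⟨q, hq, hvq, hq'⟩ := hbc v hv
      have hpb : c s(v, p) = b := (hcr v hv p hp hvp).resolve_left hp'
      have hqr : c s(v, q) = r := (hcr v hv q hq hvq).resolve_right hq'
      have hrb : r ≠ b := by rw [← hqr]; exact hq'
      have hnp : v ≠ p := by rintro rfl; exact hvp (hP.refl _)
      have hnq : v ≠ q := by rintro rfl; exact hvq (hP.refl _)
      have hbK : b ∈ K := by rw [← hpb]; exact hX v hv p hp hnp
      have hrK : r ∈ K := by rw [← hqr]; exact hX v hv q hq hnq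
      have hKe : ((K.erase r).erase b).card = k + 1 := by
        rw [Finset.card_erase_of_mem (Finset.mem_erase.2 ⟨hrb.symm, hbK⟩),
          Finset.card_erase_of_mem hrK]; omega
      apply ih k (by omega) _ _ hKe
      intro x hx y hy hxy
      rw [Finset.mem_erase, Finset.mem_erase]
      refine ⟨?_, ?_, hX x (Finset.mem_filter.1 hx).1 y (Finset.mem_filter.1 hy).1 hxy⟩
      · refine grs_nbhd c t ht hm p b _ (by simp [hvp]) ?_ (by omega) x y hx hy hxy
        intro z hz
        rw [Finset.mem_filter] at hz
        rw [Sym2.eq_swap, ← hho v z p hp hz.2 hvp]; exact hpb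
      · refine grs_nbhd c t ht hm q r _ (by simp [hvq]) ?_ (by omega) x y hx hy hxy
        intro z hz
        rw [Finset.mem_filter] at hz
        rw [Sym2.eq_swap, ← hho v z q hq hz.2 hvq]; exact hqr
    -- sets with one colour across parts
    have hY : ∀ (i : C) (Y : Finset V), Y ⊆ X →
        (∀ x ∈ Y, ∀ y ∈ Y, ¬ P x y → c s(x, y) = i) → Y.card ≤ 2 * grsH t (k + 1) := by
      intro i Y hYX hYi
      rcases Y.eq_empty_or_nonempty with rfl | ⟨y, hy⟩
      · simp
      have hsub : ∀ z ∈ X, (Y.filter (fun x => P z x)).card ≤ grsH t (k + 1) := fun z hz =>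
        (Finset.card_le_card (Finset.filter_subset_filter _ hYX)).trans (hpart z hz)
      have a1 := hsub y (hYX hy)
      have a2 := Finset.card_filter_add_card_filter_not (s := Y) (fun x => P y x)
      suffices (Y.filter (fun x => ¬ P y x)).card ≤ grsH t (k + 1) by omega
      by_cases hone : ∃ z ∈ Y.filter (fun x => ¬ P y x), ∃ w ∈ Y.filter (fun x => ¬ P y x), ¬ P z w
      · obtain ⟨z, hz, w, hw, hzw⟩ := hone
        by_contra! hlt
        have hne : z ≠ w := by rintro rfl; exact hzw (hP.refl _)
        refine grs_nbhd c t ht hm y i (Y.filter (fun x => ¬ P y x)) (by simp [hP.refl y]) ?_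
          (by omega) z w hz hw hne ?_
        · intro x hx
          rw [Finset.mem_filter] at hx
          exact hYi y hy x hx.1 hx.2
        · exact hYi z (Finset.mem_filter.1 hz).1 w (Finset.mem_filter.1 hw).1 hzw
      · push Not at hone
        rcases (Y.filter (fun x => ¬ P y x)).eq_empty_or_nonempty with he | ⟨z, hz⟩
        · rw [he]; simp
        · refine (Finset.card_le_card ?_).trans (hsub z (hYX (Finset.mem_filter.1 hz).1))
          intro w hw
          rw [Finset.mem_filter]
          exact ⟨(Finset.mem_filter.1 hw).1, hone z hz w hw⟩
    -- colour neighbourhoods outside the part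
    have hnb : ∀ i j : C, (∀ x ∈ X, ∀ y ∈ X, ¬ P x y → c s(x, y) = i ∨ c s(x, y) = j) →
        ∀ v ∈ X, (X.filter (fun x => ¬ P v x ∧ c s(v, x) = i)).card ≤ 2 * grsH t (k + 1) := by
      intro i j hij v hv
      by_cases hs : (X.filter (fun x => ¬ P v x ∧ c s(v, x) = i)).card < t - 1
      · omega
      apply hY j _ (Finset.filter_subset _ _)
      intro x hx y hy hxy
      have hne : x ≠ y := by rintro rfl; exact hxy (hP.refl _)
      have h1 := grs_nbhd c t ht hm v i (X.filter (fun x => ¬ P v x ∧ c s(v, x) = i))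
        (by simp [hP.refl v]) (fun z hz => (Finset.mem_filter.1 hz).2.2) (by omega) x y hx hy hne
      exact (hij x (Finset.mem_filter.1 hx).1 y (Finset.mem_filter.1 hy).1 hxy).resolve_left h1
    have n1 := hnb r b hcr x₁ hx₁
    have n2 := hnb b r (fun x hx y hy h => (hcr x hx y hy h).symm) x₁ hx₁
    have n0 := hpart x₁ hx₁
    have hcov : X ⊆ X.filter (fun x => P x₁ x) ∪ (X.filter (fun x => ¬ P x₁ x ∧ c s(x₁, x) = r) ∪
        X.filter (fun x => ¬ P x₁ x ∧ c s(x₁, x) = b)) := by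
      intro x hx
      have := hcr x₁ hx₁ x hx
      simp only [Finset.mem_union, Finset.mem_filter]
      tauto
    have m1 := (Finset.card_le_card hcov).trans (Finset.card_union_le _ _)
    have m2 := Finset.card_union_le (X.filter (fun x => ¬ P x₁ x ∧ c s(x₁, x) = r))
      (X.filter (fun x => ¬ P x₁ x ∧ c s(x₁, x) = b))
    omega

/-! ### Lower bound -/

/-- Adjacency in the pentagon. -/
def grsPent (a b : Fin 5) : Bool := (a + 1 == b) || (b + 1 == a)

lemma grsPent_symm : ∀ a b, grsPent a b = grsPent b a := by decide

lemma grsPent_tri : ∀ a b d : Fin 5, a ≠ b → a ≠ d → b ≠ d →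
    grsPent a b = grsPent a d → grsPent a b = grsPent b d → False := by decide

/-- Blow-up of the pentagon colouring. -/
def grsBlow {W : Type} (m : ℕ) (c : Sym2 W → ℕ) : Sym2 (Fin 5 × W) → ℕ :=
  Sym2.lift ⟨fun p q => if p.1 = q.1 then c s(p.2, q.2) else
    if grsPent p.1 q.1 = true then 2 * m + 1 else 2 * m + 2, by
      intro p q
      show (if p.1 = q.1 then c s(p.2, q.2) else
        if grsPent p.1 q.1 = true then 2 * m + 1 else 2 * m + 2) =
        (if q.1 = p.1 then c s(q.2, p.2) else
        if grsPent q.1 p.1 = true then 2 * m + 1 else 2 * m + 2)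
      rw [grsPent_symm p.1 q.1, Sym2.eq_swap (a := p.2)]
      by_cases h : p.1 = q.1
      · rw [if_pos h, if_pos h.symm]
      · rw [if_neg h, if_neg (Ne.symm h)]⟩

lemma grsBlow_mk {W : Type} (m : ℕ) (c : Sym2 W → ℕ) (p q : Fin 5 × W) :
    grsBlow m c s(p, q) = if p.1 = q.1 then c s(p.2, q.2) else
      if grsPent p.1 q.1 = true then 2 * m + 1 else 2 * m + 2 := rfl

lemma starPlus_adj_zero {t : ℕ} (a b : Fin t) (ha : a.val = 0) (hb : b.val ≠ 0) :
    (starPlus t).Adj a b := by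
  rw [starPlus, SimpleGraph.fromRel_adj]
  refine ⟨?_, Or.inl (Or.inl ha)⟩
  rintro rfl; exact hb ha

lemma starPlus_adj_12 {t : ℕ} (a b : Fin t) (ha : a.val = 1) (hb : b.val = 2) :
    (starPlus t).Adj a b := by
  rw [starPlus, SimpleGraph.fromRel_adj]
  refine ⟨?_, Or.inl (Or.inr ⟨ha, hb⟩)⟩
  rintro rfl; omega

lemma grs_lower (t : ℕ) (ht : 3 ≤ t) (m : ℕ) :
    ∃ (W : Type) (_ : Fintype W) (c : Sym2 W → ℕ), Fintype.card W = (t - 1) * 5 ^ m ∧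
      (∀ e, c e < 2 * m + 1) ∧ ¬ HasRainbowTriangle c ∧ ¬ HasMonoCopy c (starPlus t) := by
  induction m with
  | zero =>
    refine ⟨Fin (t - 1), inferInstance, fun _ => 0, by simp, by simp, ?_, ?_⟩
    · rintro ⟨u, v, w, -, -, -, h, -⟩
      exact h rfl
    · rintro ⟨i, f, hf, -⟩
      have := Fintype.card_le_of_injective f hf
      simp at this
      omega
  | succ m ih =>
    obtain ⟨W, _, c, hcard, hlt, hr, hm⟩ := ih
    refine ⟨Fin 5 × W, inferInstance, grsBlow m c, ?_, ?_, ?_, ?_⟩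
    · rw [Fintype.card_prod, hcard, Fintype.card_fin, pow_succ]; ring
    · intro e
      induction e using Sym2.ind with
      | _ p q =>
        rw [grsBlow_mk]
        have := hlt s(p.2, q.2)
        split_ifs <;> omega
    · rintro ⟨⟨a, x⟩, ⟨b, y⟩, ⟨d, z⟩, h1, h2, h3, h4, h5, h6⟩
      simp only [grsBlow_mk] at h4 h5 h6
      by_cases hab : a = b
      · subst hab
        by_cases had : a = d
        · subst had
          simp only [if_true] at h4 h5 h6
          simp only [ne_eq, Prod.mk.injEq, true_and] at h1 h2 h3
          exact hr ⟨x, y, z, h1, h2, h3, h4, h5, h6⟩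
        · simp only [had, if_false] at h6
          exact h6 rfl
      · by_cases had : a = d
        · subst had
          simp only [if_neg hab, if_neg (Ne.symm hab), grsPent_symm b a] at h5
          exact h5 rfl
        · by_cases hbd : b = d
          · subst hbd
            exact h4 (by simp only [hab, if_false])
          · simp only [hab, had, hbd, if_false] at h4 h5 h6
            split_ifs at h4 h5 h6 <;> omega
    · rintro ⟨i, f, hf, h⟩
      let o : Fin t := ⟨0, by omega⟩
      let p : Fin t := ⟨1, by omega⟩
      let q : Fin t := ⟨2, by omega⟩
      have hop := h o p (starPlus_adj_zero o p rfl (by simp [p]))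
      have hoq := h o q (starPlus_adj_zero o q rfl (by simp [q]))
      have hpq := h p q (starPlus_adj_12 p q rfl rfl)
      by_cases hi : i < 2 * m + 1
      · have hone : ∀ u v, grsBlow m c s(u, v) = i → u.1 = v.1 ∧ c s(u.2, v.2) = i := by
          intro u v huv
          rw [grsBlow_mk] at huv
          split_ifs at huv with g1 g2
          · exact ⟨g1, huv⟩
          · omega
          · omega
        have hsame : ∀ a, (f a).1 = (f o).1 := by
          intro a
          by_cases ha : a.val = 0
          · rw [show a = o from Fin.ext ha]
          · exact ((hone _ _ (h o a (starPlus_adj_zero o a rfl ha))).1).symm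
        apply hm
        refine ⟨i, fun a => (f a).2, ?_, fun a b hab => (hone _ _ (h a b hab)).2⟩
        intro a b hab
        exact hf (Prod.ext ((hsame a).trans (hsame b).symm) hab)
      · have hone : ∀ u v, grsBlow m c s(u, v) = i → u.1 ≠ v.1 ∧
            (grsPent u.1 v.1 = decide (i = 2 * m + 1)) := by
          intro u v huv
          rw [grsBlow_mk] at huv
          have := hlt s(u.2, v.2)
          split_ifs at huv with g1 g2
          · omega
          · refine ⟨g1, ?_⟩
            rw [g2]; simp [huv]
          · refine ⟨g1, ?_⟩
            simp only [Bool.not_eq_true] at g2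
            rw [g2]; symm; simp; omega
        obtain ⟨a1, a2⟩ := hone _ _ hop
        obtain ⟨b1, b2⟩ := hone _ _ hoq
        obtain ⟨d1, d2⟩ := hone _ _ hpq
        exact grsPent_tri _ _ _ a1 b1 d1 (a2.trans b2.symm) (a2.trans d2.symm)

/-- For every odd `k ≥ 1` and `t ≥ 3`, every `k`-coloring of the edges of the complete
graph on `(t-1)·5^((k-1)/2) + 1` vertices contains a rainbow triangle or a monochromatic
copy of `S_t^+`; with the matching lower bound,
`gr_k(K_3 : S_t^+) = (t-1)·5^((k-1)/2) + 1`. -/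
theorem gallaiRamsey_starPlus_odd (k t : ℕ) (hk : 1 ≤ k) (hko : Odd k) (ht : 3 ≤ t) :
    (∀ c : Sym2 (Fin ((t - 1) * 5 ^ ((k - 1) / 2) + 1)) → Fin k,
      HasRainbowTriangle c ∨ HasMonoCopy c (starPlus t)) ∧
    grK3 k (starPlus t) = (t - 1) * 5 ^ ((k - 1) / 2) + 1 := by
  obtain ⟨m, rfl⟩ := hko
  have hm2 : (2 * m + 1 - 1) / 2 = m := by omega
  rw [hm2]
  have hup : ∀ c : Sym2 (Fin ((t - 1) * 5 ^ m + 1)) → Fin (2 * m + 1),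
      HasRainbowTriangle c ∨ HasMonoCopy c (starPlus t) := by
    intro c
    by_contra! hcon
    have := grs_upper c t ht hcon.1 hcon.2 (2 * m) Finset.univ Finset.univ (by simp)
      (fun _ _ _ _ _ => Finset.mem_univ _)
    rw [grsH_odd] at this
    simp at this
  refine ⟨hup, ?_⟩
  apply le_antisymm
  · exact Nat.sInf_le hup
  · refine le_csInf ⟨_, hup⟩ ?_
    intro n hn
    by_contra! hlt
    obtain ⟨W, _, c, hcard, hc, hr, hm⟩ := grs_lower t ht m
    have hle : Fintype.card (Fin n) ≤ Fintype.card W := by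
      rw [hcard, Fintype.card_fin]; omega
    obtain ⟨e⟩ := Function.Embedding.nonempty_of_card_le hle
    rcases hn (fun z => ⟨c (z.map e), hc _⟩) with h | h
    · apply hr
      obtain ⟨u, v, w, h1, h2, h3, h4, h5, h6⟩ := h
      refine ⟨e u, e v, e w, e.injective.ne h1, e.injective.ne h2, e.injective.ne h3, ?_⟩
      simp only [Sym2.map_mk, ne_eq, Fin.mk.injEq] at h4 h5 h6
      exact ⟨h4, h5, h6⟩
    · apply hm
      obtain ⟨i, f, hf, h⟩ := h
      refine ⟨i.val, fun a => e (f a), e.injective.comp hf, ?_⟩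
      intro a b hab
      have := congrArg Fin.val (h a b hab)
      simpa using this
end

section
/- For every integer t ≥ 4, every coloring of the edges of the complete graph on 2t − 1 vertices with two colors (red and blue) contains a monochromatic copy of P_t^+. -/
open SimpleGraph

/-- `PP c p l`: the list `l` is a `p`-coloured path whose last three vertices form a triangle. -/
inductive PP {V : Type*} (c : Sym2 V → Fin 2) (p : Fin 2) : List V → Prop
  | tri (x y z : V) : c s(x, y) = p → c s(y, z) = p → c s(x, z) = p → PP c p [x, y, z]
  | cons (x y : V) (l : List V) : c s(x, y) = p → PP c p (y :: l) → PP c p (x :: y :: l)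

theorem PP.tail {V : Type*} {c : Sym2 V → Fin 2} {p : Fin 2} {x y : V} {l : List V}
    (h : PP c p (x :: y :: l)) (hl : 2 ≤ l.length) : PP c p (y :: l) := by
  cases h with
  | tri => simp at hl
  | cons _ _ _ _ h => exact h

theorem PP.len {V : Type*} {c : Sym2 V → Fin 2} {p : Fin 2} {l : List V}
    (h : PP c p l) : 3 ≤ l.length := by
  induction h with
  | tri => simp
  | cons x y l _ _ ih => simp at ih ⊢; omega

theorem PP.edges {V : Type*} {c : Sym2 V → Fin 2} {p : Fin 2} {l : List V}
    (h : PP c p l) : (∀ (i : ℕ) (hi : i + 1 < l.length), c s(l[i], l[i+1]) = p) ∧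
      (∀ (i : ℕ) (hi : i + 3 = l.length), c s(l[i], l[i+2]) = p) := by
  induction h with
  | tri x y z h1 h2 h3 =>
    constructor
    · intro i hi
      have hi' : i < 2 := by simp at hi; omega
      interval_cases i <;> simpa
    · intro i hi
      simp at hi
      subst hi
      simpa
  | cons x y l h1 h2 ih =>
    have hlen := h2.len
    constructor
    · intro i hi
      cases i with
      | zero => simpa
      | succ i => exact ih.1 i (by simp at hi ⊢; omega)
    · intro i hi
      cases i with
      | zero => simp at hi hlen; omega
      | succ i => exact ih.2 i (by simp at hi ⊢; omega)

theorem PP.copy {V : Type*} {c : Sym2 V → Fin 2} {p : Fin 2} {l : List V}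
    (h : PP c p l) (hn : l.Nodup) (t : ℕ) (ht : t ≤ l.length) : HasMonoCopy c (pathPlus t) := by
  obtain ⟨h1, h2⟩ := h.edges
  have key : ∀ a b : Fin t, (b.val = a.val + 1 ∨ (a.val = 0 ∧ b.val = 2)) →
      c s(l[l.length - 1 - a.val]'(by omega), l[l.length - 1 - b.val]'(by omega)) = p := by
    intro a b hab
    rw [Sym2.eq_swap]
    rcases hab with hab | ⟨ha, hb⟩
    · have := h1 (l.length - 1 - b.val) (by omega)
      have e : l.length - 1 - a.val = l.length - 1 - b.val + 1 := by omega
      simpa only [e] using this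
    · have := h2 (l.length - 1 - b.val) (by omega)
      have e : l.length - 1 - a.val = l.length - 1 - b.val + 2 := by omega
      simpa only [e] using this
  refine ⟨p, fun i => l[l.length - 1 - i.val]'(by omega), ?_, ?_⟩
  · intro a b hab
    have := (hn.getElem_inj_iff).1 hab
    ext
    omega
  · intro a b hab
    rw [pathPlus, SimpleGraph.fromRel_adj] at hab
    rcases hab.2 with h | h
    · exact key a b h
    · rw [Sym2.eq_swap]
      exact key b a h

theorem PP.of_pairwise {V : Type*} {c : Sym2 V → Fin 2} {p : Fin 2} (l : List V)
    (h : l.Pairwise (fun x y => c s(x, y) = p)) (hl : 3 ≤ l.length) : PP c p l := by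
  induction l with
  | nil => simp at hl
  | cons x l ih =>
    rw [List.pairwise_cons] at h
    match l, h, hl, ih with
    | [y, z], h, _, _ =>
      have := h.2
      simp at this
      exact PP.tri x y z (h.1 y (by simp)) this (h.1 z (by simp))
    | y :: z :: w :: l, h, _, ih =>
      exact PP.cons _ _ _ (h.1 y (by simp)) (ih h.2 (by simp))

theorem half_step {V : Type*} {c : Sym2 V → Fin 2} {p q : Fin 2}
    (hc : ∀ e, c e = p ∨ c e = q) {z w y : V} {l1 l2 : List V}
    (h1 : PP c p (z :: l1)) (h2 : PP c q (y :: l2)) (hw : c s(w, z) = p) :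
    ∃ z' l1' l2', PP c p (z' :: l1') ∧ PP c q (z' :: l2') ∧
      (z' :: (l1' ++ l2')).Perm (w :: z :: (l1 ++ y :: l2)) := by
  rcases hc s(w, y) with h | h
  · refine ⟨y, w :: z :: l1, l2, ?_, h2, ?_⟩
    · refine PP.cons _ _ _ (by rw [Sym2.eq_swap]; exact h) (PP.cons _ _ _ hw h1)
    · have : (y :: ((w :: z :: l1) ++ l2)).Perm ((w :: z :: l1) ++ y :: l2) :=
        List.perm_middle.symm
      simpa using this
  · exact ⟨w, z :: l1, y :: l2, PP.cons _ _ _ hw h1, PP.cons _ _ _ h h2, by simp⟩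

theorem exists_triangle {n : ℕ} (hn : 7 ≤ n) (c : Sym2 (Fin n) → Fin 2) :
    ∃ p l, PP c p l ∧ l.Nodup := by
  have aux : ∀ p q : Fin 2, (∀ e, c e = p ∨ c e = q) → ∀ v : Fin n,
      2 < ((Finset.univ.erase v).filter (fun u => c s(v, u) = p)).card →
      ∃ p l, PP c p l ∧ l.Nodup := by
    intro p q hc v h
    obtain ⟨x, hx, y, hy, z, hz, hxy, hxz, hyz⟩ := Finset.two_lt_card.1 h
    simp only [Finset.mem_filter, Finset.mem_erase, Finset.mem_univ, and_true] at hx hy hz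
    rcases hc s(x, y) with h1 | h1
    · exact ⟨p, [v, x, y], PP.tri _ _ _ hx.2 h1 hy.2, by simp [hxy, hx.1.symm, hy.1.symm]⟩
    rcases hc s(x, z) with h2 | h2
    · exact ⟨p, [v, x, z], PP.tri _ _ _ hx.2 h2 hz.2, by simp [hxz, hx.1.symm, hz.1.symm]⟩
    rcases hc s(y, z) with h3 | h3
    · exact ⟨p, [v, y, z], PP.tri _ _ _ hy.2 h3 hz.2, by simp [hyz, hy.1.symm, hz.1.symm]⟩
    · exact ⟨q, [x, y, z], PP.tri _ _ _ h1 h3 h2, by simp [hxy, hxz, hyz]⟩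
  let v : Fin n := ⟨0, by omega⟩
  have hcard : (Finset.univ.erase v).card = n - 1 := by simp
  have hs := Finset.card_filter_add_card_filter_not (s := Finset.univ.erase v)
    (fun u => c s(v, u) = 0)
  have h2 : ∀ x : Fin 2, x = 0 ∨ x = 1 := by decide
  have h3 : ∀ x : Fin 2, ¬ x = 0 ↔ x = 1 := by decide
  simp only [h3] at hs
  by_cases h : 2 < ((Finset.univ.erase v).filter (fun u => c s(v, u) = 0)).card
  · exact aux 0 1 (fun e => h2 _) v h
  · exact aux 1 0 (fun e => (h2 _).symm) v (by omega)

theorem exists_outside {n : ℕ} (l : List (Fin n)) (hl : l.length < n) : ∃ w, w ∉ l := by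
  by_contra! h
  have h1 : l.toFinset = Finset.univ := by ext; simp [h]
  have h2 := l.toFinset_card_le
  rw [h1] at h2
  simp at h2
  omega

/-- For every `t ≥ 4`, every 2-coloring of the edges of the complete graph on
`2t - 1` vertices contains a monochromatic copy of `P_t^+`. -/
theorem ramsey_pathPlus_upper (t : ℕ) (ht : 4 ≤ t)
    (c : Sym2 (Fin (2 * t - 1)) → Fin 2) :
    HasMonoCopy c (pathPlus t) := by
  by_contra hno
  have hlt : ∀ p l, PP c p l → l.Nodup → l.length < t := by
    intro p l h hn
    by_contra! hl
    exact hno (h.copy hn t hl)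
  -- a longest monochromatic path with a triangle at the end
  obtain ⟨p, l, hl, hln, hmax⟩ : ∃ p l, PP c p l ∧ l.Nodup ∧
      ∀ p' l', PP c p' l' → l'.Nodup → l'.length ≤ l.length := by
    classical
    obtain ⟨p0, l0, h0, hn0⟩ := exists_triangle (by omega) c
    let Q : ℕ → Prop := fun k => ∃ p l, PP c p l ∧ l.Nodup ∧ l.length = k
    have hQ : Q (Nat.findGreatest Q t) :=
      Nat.findGreatest_spec (m := l0.length) (hlt _ _ h0 hn0).le ⟨p0, l0, h0, hn0, rfl⟩
    obtain ⟨p, l, h, hn, hk⟩ := hQ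
    refine ⟨p, l, h, hn, fun p' l' h' hn' => ?_⟩
    rw [hk]
    exact Nat.le_findGreatest (hlt _ _ h' hn').le ⟨p', l', h', hn', rfl⟩
  obtain ⟨q, hc⟩ : ∃ q : Fin 2, ∀ e, c e = p ∨ c e = q := by
    have : ∀ p : Fin 2, ∃ q : Fin 2, ∀ x : Fin 2, x = p ∨ x = q := by decide
    obtain ⟨q, hq⟩ := this p
    exact ⟨q, fun e => hq _⟩
  have hlen := hlt p l hl hln
  obtain ⟨z, l1, rfl⟩ : ∃ z l1, l = z :: l1 := by
    cases l with
    | nil => have := hl.len; simp at this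
    | cons z l1 => exact ⟨z, l1, rfl⟩
  set a := (z :: l1).length with ha
  -- building the two-coloured structure
  have main : ∀ k, a + 2 + k ≤ 2 * t - 1 → ∃ z l1 l2, PP c p (z :: l1) ∧ PP c q (z :: l2) ∧
      (z :: (l1 ++ l2)).Nodup ∧ l1.length + l2.length + 1 = a + 2 + k := by
    intro k
    induction k with
    | zero =>
      intro _
      let O : Finset (Fin (2 * t - 1)) := Finset.univ \ (z :: l1).toFinset
      have hO : ∀ w, w ∈ O ↔ w ∉ z :: l1 := by intro w; simp [O]
      have hOcard : t ≤ O.card := by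
        have h1 : O.card = 2 * t - 1 - a := by
          rw [Finset.card_sdiff_of_subset (Finset.subset_univ _), List.toFinset_card_of_nodup hln]
          simp [ha]
        omega
      have hz : ∀ w ∈ O, c s(z, w) = q := by
        intro w hw
        rcases hc s(z, w) with h | h
        · have := hmax p (w :: z :: l1) (PP.cons _ _ _ (by rw [Sym2.eq_swap]; exact h) hl)
            (List.nodup_cons.2 ⟨(hO w).1 hw, hln⟩)
          simp [ha] at this
        · exact h
      by_cases hb : ∃ x ∈ O, ∃ y ∈ O, x ≠ y ∧ c s(x, y) = q
      · obtain ⟨x, hx, y, hy, hxy, hxyq⟩ := hb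
        refine ⟨z, l1, [x, y], hl, PP.tri _ _ _ (hz x hx) hxyq (hz y hy), ?_, by simp [ha]⟩
        have hx' := (hO x).1 hx
        have hy' := (hO y).1 hy
        have : (x :: y :: z :: l1).Nodup := by
          refine List.nodup_cons.2 ⟨?_, List.nodup_cons.2 ⟨hy', hln⟩⟩
          simp only [List.mem_cons] at hx' ⊢
          tauto
        refine (List.Perm.nodup_iff ?_).1 this
        have := List.perm_append_comm (l₁ := [x, y]) (l₂ := z :: l1)
        simpa using this
      · exfalso
        push Not at hb
        have hpw : PP c p O.toList := by
          refine PP.of_pairwise _ ?_ (by simp; omega)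
          refine List.Pairwise.imp_of_mem ?_ O.nodup_toList
          intro x y hx hy hxy
          rcases hc s(x, y) with h | h
          · exact h
          · exact absurd h (hb x (Finset.mem_toList.1 hx) y (Finset.mem_toList.1 hy) hxy)
        have := hlt p _ hpw O.nodup_toList
        simp at this
        omega
    | succ k ih =>
      intro hk
      obtain ⟨z, l1, l2, h1, h2, hn, hs⟩ := ih (by omega)
      obtain ⟨w, hw⟩ := exists_outside (z :: (l1 ++ l2)) (by simp; omega)
      have hnw : (w :: z :: (l1 ++ l2)).Nodup := List.nodup_cons.2 ⟨hw, hn⟩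
      have hn1 : (w :: z :: l1).Nodup :=
        hnw.sublist (by simp)
      have hn2 : (w :: z :: l2).Nodup :=
        hnw.sublist (by simp)
      have m1 := hmax p _ h1 (List.nodup_cons.1 hn1).2
      have m2 := hmax q _ h2 (List.nodup_cons.1 hn2).2
      simp only [List.length_cons] at m1 m2
      rcases hc s(w, z) with h | h
      · have m3 := hmax p _ (PP.cons _ _ _ h h1) hn1
        simp only [List.length_cons] at m3
        match l2, h2, hnw, hs, m2 with
        | [], _, _, hs, m2 => simp at hs; omega
        | y :: l2, h2, hnw, hs, m2 =>
          simp only [List.length_cons] at hs m2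
          obtain ⟨z', l1', l2', g1, g2, g3⟩ := half_step hc h1 (h2.tail (by omega)) h
          refine ⟨z', l1', l2', g1, g2, g3.nodup_iff.2 hnw, ?_⟩
          have := g3.length_eq
          simp at this
          omega
      · have m3 := hmax q _ (PP.cons _ _ _ h h2) hn2
        simp only [List.length_cons] at m3
        match l1, h1, hnw, hs, m1 with
        | [], _, _, hs, m1 => simp at hs; omega
        | y :: l1, h1, hnw, hs, m1 =>
          simp only [List.length_cons] at hs m1
          obtain ⟨z', l2', l1', g2, g1, g3⟩ :=
            half_step (fun e => (hc e).symm) h2 (h1.tail (by omega)) h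
          refine ⟨z', l1', l2', g1, g2, ?_, ?_⟩
          · have e1 : (z' :: (l1' ++ l2')).Perm (z' :: (l2' ++ l1')) :=
              List.perm_append_comm.cons _
            have e2 : (w :: z :: (l2 ++ y :: l1)).Perm (w :: z :: (y :: l1 ++ l2)) :=
              (List.perm_append_comm.cons _).cons _
            exact (e1.trans (g3.trans e2)).nodup_iff.2 hnw
          · have := g3.length_eq
            simp at this
            omega
  obtain ⟨z', l1', l2', h1, h2, hn, hs⟩ := main (2 * t - 1 - (a + 2)) (by omega)
  have m1 := hmax p _ h1 (hn.sublist (by simp))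
  have m2 := hmax q _ h2 (hn.sublist (by simp))
  simp only [List.length_cons] at m1 m2
  omega
end

section
/- For all integers s and t with t ≥ s ≥ 4, every coloring of the edges of the complete graph on 2t − 1 vertices with two colors (red and blue) contains either a red copy of P_s^+ or a blue copy of P_t^+; that is, R(P_s^+, P_t^+) ≤ 2t − 1, and together with the lower-bound construction, R(P_s^+, P_t^+) = 2t − 1. -/
open SimpleGraph

/-- A path with a triangle at its start, of length at least `t`, in the relation `r`. -/
def HasPP {V : Type*} (r : V → V → Prop) (t : ℕ) : Prop :=
  ∃ (a b : V) (N : List V), (a :: b :: N).Nodup ∧ (a :: b :: N).IsChain r ∧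
    (∀ c ∈ N.head?, r a c) ∧ t ≤ N.length + 2

theorem isChain_of_split {V : Type*} (R : V → V → Prop) (M : List V)
    (h : ∀ p q q' s, M = p ++ q :: q' :: s → R q q') : M.IsChain R := by
  induction M with
  | nil => simp
  | cons a M ih =>
    cases M with
    | nil => simp
    | cons a' M =>
      refine List.IsChain.cons_cons (h [] a a' M rfl) (ih ?_)
      intro p q q' s hM
      exact h (a :: p) q q' s (by simp [hM])

/-- The linking lemma. -/
theorem link {V : Type*} (b : V → V → Prop) (U : V → Prop) (us : List V) :
    ∀ (u : V) (M : List V), (u :: us ++ M).Nodup → (∀ y ∈ u :: us, U y) →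
    M.IsChain (fun q q' => ∀ y y', U y → U y' → y ≠ y' →
      b y y' ∨ (b y q ∧ b q y') ∨ (b y q' ∧ b q' y')) →
    ∃ P : List V, (u :: P).Nodup ∧ (u :: P).IsChain b ∧ (∀ y ∈ P, y ∈ us ∨ y ∈ M) ∧
      (∃ y ∈ (u :: P).getLast?, U y) ∧ min us.length (2 * (M.length / 2)) ≤ P.length := by
  induction us with
  | nil =>
    intro u M hn hU hM
    exact ⟨[], by simp, by simp, by simp, ⟨u, by simp, hU u (by simp)⟩, by simp⟩
  | cons u' us ih =>
    intro u M hn hU hM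
    match M, hn, hM with
    | [], hn, hM => exact ⟨[], by simp, by simp, by simp, ⟨u, by simp, hU u (by simp)⟩, by simp⟩
    | [q], hn, hM => exact ⟨[], by simp, by simp, by simp, ⟨u, by simp, hU u (by simp)⟩, by simp⟩
    | q :: q' :: s, hn, hM =>
      have hne : u ≠ u' := by rintro rfl; simp at hn
      have hq := (List.isChain_cons_cons.1 hM).1 u u' (hU u (by simp)) (hU u' (by simp)) hne
      by_cases hb : b u u'
      · obtain ⟨P, h1, h2, h3, ⟨y, hy, hyU⟩, h5⟩ := ih u' (q :: q' :: s)
          (by simp only [List.cons_append, List.nodup_cons] at hn ⊢; exact hn.2)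
          (fun y hy => hU y (List.mem_cons_of_mem _ hy)) hM
        refine ⟨u' :: P, ?_, List.IsChain.cons_cons hb h2, ?_, ⟨y, ?_, hyU⟩, ?_⟩
        · refine List.nodup_cons.2 ⟨?_, h1⟩
          intro hu
          rcases List.mem_cons.1 hu with h | h
          · exact hne h
          · have := h3 u h
            have h0 := (List.nodup_cons.1 hn).1
            apply h0
            rcases this with h | h
            · exact List.mem_append_left _ (List.mem_cons_of_mem _ h)
            · exact List.mem_append_right _ h
        · intro z hz
          rcases List.mem_cons.1 hz with rfl | h
          · simp
          · rcases h3 z h with h | h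
            · exact Or.inl (List.mem_cons_of_mem _ h)
            · exact Or.inr h
        · simpa using hy
        · simp only [List.length_cons] at *; omega
      · have key : ∃ z, (z = q ∨ z = q') ∧ b u z ∧ b z u' := by
          rcases hq with h | h | h
          · exact absurd h hb
          · exact ⟨q, Or.inl rfl, h⟩
          · exact ⟨q', Or.inr rfl, h⟩
        obtain ⟨z, hz, hz1, hz2⟩ := key
        have hnall := hn
        obtain ⟨P, h1, h2, h3, ⟨y, hy, hyU⟩, h5⟩ := ih u' s
          (by
            refine List.Nodup.sublist ?_ hn
            simp only [List.cons_append]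
            refine List.Sublist.cons _ (List.Sublist.cons_cons _ ?_)
            refine List.Sublist.append_left ?_ _
            exact List.Sublist.cons _ (List.Sublist.cons _ (List.Sublist.refl _)))
          (fun y hy => hU y (List.mem_cons_of_mem _ hy)) hM.tail.tail
        have hd : u ∉ u' :: P ∧ z ∉ u' :: P ∧ u ≠ z := by
          simp only [List.cons_append, List.nodup_cons, List.nodup_append, List.mem_append,
            List.mem_cons, not_or] at hn
          refine ⟨?_, ?_, ?_⟩
          · intro h
            rcases List.mem_cons.1 h with h | h
            · exact hne h
            · have := h3 u h
              grind
          · intro h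
            rcases List.mem_cons.1 h with h | h
            · grind
            · have := h3 z h
              grind
          · grind
        refine ⟨z :: u' :: P, ?_, List.IsChain.cons_cons hz1 (List.IsChain.cons_cons hz2 h2), ?_,
          ⟨y, ?_, hyU⟩, ?_⟩
        · refine List.nodup_cons.2 ⟨?_, List.nodup_cons.2 ⟨hd.2.1, h1⟩⟩
          intro h
          rcases List.mem_cons.1 h with h | h
          · exact hd.2.2 h
          · exact hd.1 h
        · intro w hw
          simp only [List.mem_cons] at hw ⊢
          rcases hw with rfl | rfl | h
          · tauto
          · tauto
          · have := h3 w h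
            tauto
        · simpa using hy
        · simp only [List.length_cons] at *; omega

set_option maxHeartbeats 1000000 in
theorem step {V : Type*} [Fintype V] [DecidableEq V] (r b : V → V → Prop)
    (hr : ∀ x y, r x y → r y x) (hb : ∀ x y, b x y → b y x)
    (hrb : ∀ x y, x ≠ y → r x y ∨ b x y) (t : ℕ) (ht : 3 ≤ t)
    (hV : 2 * (t + 1) - 1 ≤ Fintype.card V) (h : HasPP r t) :
    HasPP r (t + 1) ∨ HasPP b (t + 1) := by
  by_contra hcon
  rw [not_or] at hcon
  obtain ⟨hnr, hnb⟩ := hcon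
  obtain ⟨v1, v2, N, hnd, hch, htri, hlen⟩ := h
  have hlen' : N.length + 2 = t := by
    by_contra hne
    exact hnr ⟨v1, v2, N, hnd, hch, htri, by omega⟩
  have hN : N ≠ [] := by rintro rfl; simp at hlen'; omega
  obtain ⟨M, x, rfl⟩ : ∃ M x, N = M ++ [x] :=
    ⟨N.dropLast, N.getLast hN, (List.dropLast_append_getLast hN).symm⟩
  have hM : M.length + 3 = t := by simp at hlen'; omega
  set L := v1 :: v2 :: (M ++ [x]) with hL
  let U : Finset V := Finset.univ \ L.toFinset
  have hUmem : ∀ y, y ∈ U ↔ y ∉ L := by intro y; simp [U]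
  have hUcard : t + 1 ≤ U.card := by
    have h1 : L.toFinset.card = t := by
      rw [List.toFinset_card_of_nodup hnd]; simp [hL]; omega
    have h2 : U.card = Fintype.card V - L.toFinset.card := by
      simp only [U]
      rw [← Finset.compl_eq_univ_sdiff, Finset.card_compl]
    omega
  have hxU : ∀ y ∈ U, b x y := by
    intro y hy
    have hyL := (hUmem y).1 hy
    have hne : x ≠ y := by rintro rfl; exact hyL (by simp [hL])
    rcases hrb x y hne with h | h
    · exfalso
      apply hnr
      refine ⟨v1, v2, M ++ [x] ++ [y], ?_, ?_, ?_, ?_⟩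
      · have : (L ++ [y]).Nodup := by
          rw [List.nodup_append]
          refine ⟨hnd, by simp, ?_⟩
          intro a ha c hc
          simp at hc
          subst hc
          rintro rfl
          exact hyL ha
        simpa [hL] using this
      · have : (L ++ [y]).IsChain r := by
          rw [List.isChain_append]
          refine ⟨hch, by simp, ?_⟩
          intro a ha c hc
          have ha' : x = a := by simpa [hL, List.getLast?_cons] using ha
          simp at hc
          subst hc; subst ha'; exact h
        simpa [hL] using this
      · intro c hc
        apply htri
        cases M <;> simpa using hc
      · simp; omega
    · exact h
  have h12 : ∀ y ∈ U, b y v1 ∨ b y v2 := by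
    intro y hy
    have hyL := (hUmem y).1 hy
    by_contra hc
    rw [not_or] at hc
    have e1 : r y v1 := (hrb y v1 (by rintro rfl; simp [hL] at hyL)).resolve_right hc.1
    have e2 : r y v2 := (hrb y v2 (by rintro rfl; simp [hL] at hyL)).resolve_right hc.2
    apply hnr
    refine ⟨y, v1, v2 :: (M ++ [x]), List.nodup_cons.2 ⟨hyL, hnd⟩,
      List.IsChain.cons_cons e1 hch, by simpa using e2, ?_⟩
    simp; omega
  have hlink : M.IsChain (fun q q' => ∀ y y', y ∈ U → y' ∈ U → y ≠ y' →
      b y y' ∨ (b y q ∧ b q y') ∨ (b y q' ∧ b q' y')) := by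
    apply isChain_of_split
    rintro p q q' s hMs y y' hy hy' hyy
    have hyL := (hUmem y).1 hy
    have hyL' := (hUmem y').1 hy'
    have ins : ∀ I : List V, I ≠ [] → I.Nodup → (∀ z ∈ I, z ∉ L) → (q :: I ++ [q']).IsChain r →
        False := by
      intro I hI hIn hIL hIc
      apply hnr
      have hlI : 1 ≤ I.length := List.length_pos_iff.2 hI
      refine ⟨v1, v2, p ++ q :: (I ++ q' :: (s ++ [x])), ?_, ?_, ?_, ?_⟩
      · have hperm : (v1 :: v2 :: (p ++ q :: (I ++ q' :: (s ++ [x])))).Perm (I ++ L) := by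
          rw [hL, hMs, List.perm_iff_count]
          intro a
          simp [List.count_append, List.count_cons]
          omega
        rw [hperm.nodup_iff, List.nodup_append]
        refine ⟨hIn, hnd, ?_⟩
        intro a ha c hc
        rintro rfl
        exact hIL a ha hc
      · have hch1 : ((v1 :: v2 :: p ++ [q]) ++ (q' :: (s ++ [x]))).IsChain r := by
          simpa [hL, hMs] using hch
        obtain ⟨c1, c2, -⟩ := List.isChain_append.1 hch1
        have c3 : ((v1 :: v2 :: p) ++ [q] ++ (I ++ [q'])).IsChain r :=
          List.IsChain.append_overlap (by simpa using c1) (by simpa using hIc) (by simp)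
        have c4 : ((v1 :: v2 :: p ++ [q] ++ I) ++ [q'] ++ (s ++ [x])).IsChain r :=
          List.IsChain.append_overlap (by simpa using c3) (by simpa using c2) (by simp)
        simpa using c4
      · intro c hc
        apply htri
        rw [hMs]
        cases p <;> simpa using hc
      · rw [hMs] at hM
        simp at hM ⊢
        omega
    have hqL : q ∈ L := by simp [hL, hMs]
    have hqL' : q' ∈ L := by simp [hL, hMs]
    have ne1 : ∀ z ∈ U, z ≠ q := fun z hz e => (hUmem z).1 hz (e ▸ hqL)
    have ne2 : ∀ z ∈ U, z ≠ q' := fun z hz e => (hUmem z).1 hz (e ▸ hqL')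
    have one : ∀ z ∈ U, b z q ∨ b z q' := by
      intro z hz
      by_contra hc
      rw [not_or] at hc
      have e1 := (hrb z q (ne1 z hz)).resolve_right hc.1
      have e2 := (hrb z q' (ne2 z hz)).resolve_right hc.2
      exact ins [z] (by simp) (by simp) (by simpa using (hUmem z).1 hz)
        (by simp [hr _ _ e1, e2])
    have two : ∀ z z', z ∈ U → z' ∈ U → z ≠ z' → ¬ b z q → ¬ b z' q' → b z z' := by
      intro z z' hz hz' hzz h1 h2
      by_contra h3
      have e1 := (hrb z q (ne1 z hz)).resolve_right h1
      have e2 := (hrb z' q' (ne2 z' hz')).resolve_right h2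
      have e3 := (hrb z z' hzz).resolve_right h3
      refine ins [z, z'] (by simp) (by simpa using hzz) ?_ (by simp [hr _ _ e1, e2, e3])
      intro w hw
      simp at hw
      rcases hw with rfl | rfl
      · exact (hUmem _).1 hz
      · exact (hUmem _).1 hz'
    by_contra hc
    rw [not_or, not_or] at hc
    obtain ⟨hc1, hc2, hc3⟩ := hc
    have s1 : ¬ (b y q ∧ b y' q) := fun h => hc2 ⟨h.1, hb _ _ h.2⟩
    have s2 : ¬ (b y q' ∧ b y' q') := fun h => hc3 ⟨h.1, hb _ _ h.2⟩
    have o1 := one y hy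
    have o2 := one y' hy'
    have t1 := two y y' hy hy' hyy
    have t2 := two y' y hy' hy hyy.symm
    rcases o1 with h | h
    · have h1 : ¬ b y' q := fun h' => s1 ⟨h, h'⟩
      have h2 : ¬ b y q' := fun h' => s2 ⟨h', o2.resolve_left h1⟩
      exact hc1 (hb _ _ (t2 h1 h2))
    · have h1 : ¬ b y' q' := fun h' => s2 ⟨h, h'⟩
      have h2 : ¬ b y q := fun h' => s1 ⟨h', o2.resolve_right h1⟩
      exact hc1 (t1 h2 h1)
  have hedge : ∃ u1 ∈ U, ∃ u2 ∈ U, u1 ≠ u2 ∧ b u1 u2 := by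
    by_contra hno
    push Not at hno
    have hrU : ∀ y ∈ U, ∀ z ∈ U, y ≠ z → r y z := fun y hy z hz hyz =>
      (hrb y z hyz).resolve_right (hno y hy z hz hyz)
    have hlU : U.toList.length = U.card := Finset.length_toList U
    have hnU := Finset.nodup_toList U
    have hmU : ∀ y ∈ U.toList, y ∈ U := fun y hy => Finset.mem_toList.1 hy
    have hpw : U.toList.Pairwise r := by
      refine List.Pairwise.imp_of_mem ?_ hnU
      intro a c ha hc hac
      exact hrU a (hmU a ha) c (hmU c hc) hac
    generalize U.toList = K at *
    match K, hlU, hnU, hpw with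
    | [], hlU, _, _ => simp at hlU; omega
    | [_], hlU, _, _ => simp at hlU; omega
    | a :: a' :: K, hlU, hnU, hpw =>
      refine hnr ⟨a, a', K, hnU, hpw.isChain, ?_, ?_⟩
      · intro c hc
        exact (List.pairwise_cons.1 hpw).1 c (List.mem_cons_of_mem _ (List.mem_of_mem_head? hc))
      · simp at hlU; omega
  obtain ⟨u1, hu1, u2, hu2, hne, hb12⟩ := hedge
  let U' := (U.erase u1).erase u2
  have hU' : ∀ y ∈ U', y ∈ U ∧ y ≠ u1 ∧ y ≠ u2 := by
    intro y hy; simp [U'] at hy; tauto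
  have hU'c : t - 1 ≤ U'.card := by
    have h1 : (U.erase u1).card = U.card - 1 := Finset.card_erase_of_mem hu1
    have h2 : U'.card = (U.erase u1).card - 1 :=
      Finset.card_erase_of_mem (Finset.mem_erase.2 ⟨hne.symm, hu2⟩)
    omega
  have hlU : U'.toList.length = U'.card := Finset.length_toList U'
  have hnU := Finset.nodup_toList U'
  have hmU : ∀ y ∈ U'.toList, y ∈ U' := fun y hy => Finset.mem_toList.1 hy
  generalize U'.toList = K at *
  match K, hlU, hnU, hmU with
  | [], hlU, _, _ => simp at hlU; omega
  | u3 :: us, hlU, hnU, hmU =>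
    have hML : ∀ y ∈ M, y ∈ L := fun y hy => by simp [hL, hy]
    have hMnd : M.Nodup := by
      refine List.Nodup.sublist ?_ hnd
      exact List.Sublist.cons _ (List.Sublist.cons _ (List.sublist_append_left _ _))
    obtain ⟨P, p1, p2, p3, ⟨y, hy, hyU⟩, p5⟩ := link b (· ∈ U) us u3 M
      (by
        rw [List.nodup_append]
        refine ⟨hnU, hMnd, ?_⟩
        rintro a ha c hc rfl
        exact (hUmem a).1 (hU' a (hmU a ha)).1 (hML a hc))
      (fun y hy => (hU' y (hmU y hy)).1) hlink
    have hz : ∃ z, (z = v1 ∨ z = v2) ∧ b y z := by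
      rcases h12 y hyU with h | h
      · exact ⟨v1, Or.inl rfl, h⟩
      · exact ⟨v2, Or.inr rfl, h⟩
    obtain ⟨z, hz, hyz⟩ := hz
    have hzL : z ∈ L := by rcases hz with rfl | rfl <;> simp [hL]
    have hxL : x ∈ L := by simp [hL]
    have hxM : x ∉ M ∧ z ∉ M ∧ z ≠ x := by
      simp only [hL, List.nodup_cons, List.nodup_append, List.mem_append, List.mem_cons,
        List.mem_singleton] at hnd
      grind
    have hPm : ∀ w ∈ u3 :: P, (w ∈ U ∧ w ≠ u1 ∧ w ≠ u2) ∨ w ∈ M := by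
      intro w hw
      rcases List.mem_cons.1 hw with rfl | hw
      · exact Or.inl (hU' _ (hmU _ (by simp)))
      · rcases p3 w hw with h | h
        · exact Or.inl (hU' _ (hmU _ (by simp [h])))
        · exact Or.inr h
    have notU : ∀ w ∈ L, w ∉ U := fun w hw hwU => (hUmem w).1 hwU hw
    have f1 : u1 ∉ u3 :: P := fun h => by
      rcases hPm _ h with h | h
      · exact h.2.1 rfl
      · exact notU _ (hML _ h) hu1
    have f2 : u2 ∉ u3 :: P := fun h => by
      rcases hPm _ h with h | h
      · exact h.2.2 rfl
      · exact notU _ (hML _ h) hu2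
    have f3 : x ∉ u3 :: P := fun h => by
      rcases hPm _ h with h | h
      · exact notU _ hxL h.1
      · exact hxM.1 h
    have f4 : z ∉ u3 :: P := fun h => by
      rcases hPm _ h with h | h
      · exact notU _ hzL h.1
      · exact hxM.2.1 h
    have g1 : ∀ w ∈ L, u1 ≠ w := fun w hw e => notU w hw (e ▸ hu1)
    have g2 : ∀ w ∈ L, u2 ≠ w := fun w hw e => notU w hw (e ▸ hu2)
    apply hnb
    refine ⟨u1, u2, x :: ((u3 :: P) ++ [z]), ?_, ?_, ?_, ?_⟩
    · have k1 : ((u3 :: P) ++ [z]).Nodup := by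
        rw [List.nodup_append]
        refine ⟨p1, by simp, ?_⟩
        intro a ha c hc
        simp at hc
        subst hc
        rintro rfl
        exact f4 ha
      rw [List.nodup_cons, List.nodup_cons, List.nodup_cons]
      refine ⟨?_, ?_, ?_, k1⟩
      · intro h
        rw [List.mem_cons, List.mem_cons, List.mem_append, List.mem_singleton] at h
        rcases h with h | h | h | h
        · exact hne h
        · exact g1 _ hxL h
        · exact f1 h
        · exact g1 _ hzL h
      · intro h
        rw [List.mem_cons, List.mem_append, List.mem_singleton] at h
        rcases h with h | h | h
        · exact g2 _ hxL h
        · exact f2 h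
        · exact g2 _ hzL h
      · intro h
        rw [List.mem_append, List.mem_singleton] at h
        rcases h with h | h
        · exact f3 h
        · exact hxM.2.2 h.symm
    · refine List.IsChain.cons_cons hb12 (List.IsChain.cons_cons (hb _ _ (hxU _ hu2)) ?_)
      refine List.IsChain.cons_cons (hxU _ (hU' _ (hmU _ (by simp))).1) ?_
      have : ((u3 :: P) ++ [z]).IsChain b := by
        rw [List.isChain_append]
        refine ⟨p2, by simp, ?_⟩
        intro a ha c hc
        simp at hc
        subst hc
        rw [Option.mem_unique ha hy]
        exact hyz
      exact this
    · intro c hc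
      simp at hc
      subst hc
      exact hb _ _ (hxU _ hu1)
    · simp only [List.length_cons, List.length_append, List.length_nil] at *
      omega

theorem base_aux {V : Type*} [Fintype V] [DecidableEq V] (r b : V → V → Prop)
    (hrb : ∀ x y, x ≠ y → r x y ∨ b x y)
    (v : V) (A : Finset V) (hv : v ∉ A) (hA : 3 ≤ A.card) (h : ∀ y ∈ A, r v y) :
    HasPP r 3 ∨ HasPP b 3 := by
  obtain ⟨B, hBA, hB⟩ := Finset.exists_subset_card_eq hA
  obtain ⟨p, q, w, hpq, hpw, hqw, rfl⟩ := Finset.card_eq_three.1 hB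
  have mp : p ∈ A := hBA (by simp)
  have mq : q ∈ A := hBA (by simp)
  have mw : w ∈ A := hBA (by simp)
  have np : v ≠ p := fun e => hv (e ▸ mp)
  have nq : v ≠ q := fun e => hv (e ▸ mq)
  have nw : v ≠ w := fun e => hv (e ▸ mw)
  by_cases h1 : r p q
  · exact Or.inl ⟨v, p, [q], by simp [*], by simp [*], by simp [*], by simp⟩
  by_cases h2 : r q w
  · exact Or.inl ⟨v, q, [w], by simp [*], by simp [*], by simp [*], by simp⟩
  by_cases h3 : r p w
  · exact Or.inl ⟨v, p, [w], by simp [*], by simp [*], by simp [*], by simp⟩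
  have h1 := (hrb _ _ hpq).resolve_left h1
  have h2 := (hrb _ _ hqw).resolve_left h2
  have h3 := (hrb _ _ hpw).resolve_left h3
  exact Or.inr ⟨p, q, [w], by simp [*], by simp [*], by simp [*], by simp⟩

theorem diag {V : Type*} [Fintype V] [DecidableEq V] (r b : V → V → Prop)
    (hr : ∀ x y, r x y → r y x) (hb : ∀ x y, b x y → b y x)
    (hrb : ∀ x y, x ≠ y → r x y ∨ b x y) (h6 : 6 ≤ Fintype.card V) (t : ℕ) (ht : 3 ≤ t) :
    2 * t - 1 ≤ Fintype.card V → HasPP r t ∨ HasPP b t := by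
  classical
  induction t, ht using Nat.le_induction with
  | base =>
    intro _
    have : 0 < Fintype.card V := by omega
    obtain ⟨v⟩ := Fintype.card_pos_iff.1 this
    let A := (Finset.univ.erase v).filter (r v)
    let B := (Finset.univ.erase v).filter (fun y => ¬ r v y)
    have hAB : A.card + B.card = Fintype.card V - 1 := by
      have := Finset.card_filter_add_card_filter_not (s := Finset.univ.erase v) (r v)
      rw [Finset.card_erase_of_mem (Finset.mem_univ v), Finset.card_univ] at this
      exact this
    by_cases hA : 3 ≤ A.card
    · exact base_aux r b hrb v A (by simp [A]) hA (by simp [A])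
    · refine (base_aux b r (fun x y h => (hrb x y h).symm) v B (by simp [B]) (by omega) ?_).symm
      intro y hy
      simp [B] at hy
      exact (hrb v y (Ne.symm hy.1)).resolve_left hy.2
  | succ t ht ih =>
    intro hV
    rcases ih (by omega) with h | h
    · exact step r b hr hb hrb t ht hV h
    · exact (step b r hb hr (fun x y h => (hrb x y h).symm) t ht hV h).symm

theorem copy_of_HasPP {V : Type*} (c : Sym2 V → Fin 2) (i : Fin 2) (t : ℕ)
    (h : HasPP (fun x y => c s(x, y) = i) t) : HasCopyIn c i (pathPlus t) := by
  obtain ⟨a, b, N, hnd, hch, htri, hlen⟩ := h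
  have hlt : ∀ k : Fin t, k.val < (a :: b :: N).length := fun k => by
    have := k.isLt
    simp; omega
  have hR : ∀ k l : Fin t, (l.val = k.val + 1 ∨ (k.val = 0 ∧ l.val = 2)) →
      c s((a :: b :: N)[k.val]'(hlt k), (a :: b :: N)[l.val]'(hlt l)) = i := by
    rintro ⟨k, hk⟩ ⟨l, hl⟩ h
    have hl2 := hlt ⟨l, hl⟩
    simp only at h hl2 ⊢
    rcases h with rfl | ⟨rfl, rfl⟩
    · exact List.isChain_iff_getElem.1 hch k hl2
    · cases N with
      | nil => simp at hl2
      | cons d N => simpa using htri d (by simp)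
  refine ⟨fun k => (a :: b :: N)[k.val]'(hlt k), ?_, ?_⟩
  · intro k l hkl
    exact Fin.ext ((List.Nodup.getElem_inj_iff hnd).1 hkl)
  · intro k l hkl
    rw [pathPlus, SimpleGraph.fromRel_adj] at hkl
    rcases hkl.2 with h | h
    · exact hR k l h
    · rw [Sym2.eq_swap]
      exact hR l k h

theorem HasPP.mono {V : Type*} {r : V → V → Prop} {s t : ℕ} (hst : s ≤ t) (h : HasPP r t) :
    HasPP r s := by
  obtain ⟨a, b, N, h1, h2, h3, h4⟩ := h
  exact ⟨a, b, N, h1, h2, h3, by omega⟩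

/-- Lower bound: two blue cliques of order at most `t - 1`, red in between. -/
theorem lower (s t n : ℕ) (hs : 4 ≤ s) (hst : s ≤ t) (hn : n < 2 * t - 1) :
    ∃ c : Sym2 (Fin n) → Fin 2,
      ¬ (HasCopyIn c 0 (pathPlus s) ∨ HasCopyIn c 1 (pathPlus t)) := by
  let side : Fin n → Prop := fun i => i.val < t - 1
  classical
  let c : Sym2 (Fin n) → Fin 2 := Sym2.lift
    ⟨fun x y => if (side x ↔ side y) then 1 else 0, fun x y => by simp only [Iff.comm]⟩
  have hc : ∀ x y, c s(x, y) = if (side x ↔ side y) then 1 else 0 := fun x y => rfl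
  refine ⟨c, ?_⟩
  rintro (⟨f, hf, hcol⟩ | ⟨f, hf, hcol⟩)
  · have h01 := hcol ⟨0, by omega⟩ ⟨1, by omega⟩ (by simp [pathPlus])
    have h12 := hcol ⟨1, by omega⟩ ⟨2, by omega⟩ (by simp [pathPlus])
    have h02 := hcol ⟨0, by omega⟩ ⟨2, by omega⟩ (by simp [pathPlus])
    rw [hc] at h01 h12 h02
    simp at h01 h12 h02
    tauto
  · have hall : ∀ k (hk : k < t), side (f ⟨k, hk⟩) ↔ side (f ⟨0, by omega⟩) := by
      intro k
      induction k with
      | zero => intro _; rfl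
      | succ k ih =>
        intro hk
        have h := hcol ⟨k, by omega⟩ ⟨k + 1, hk⟩ (by simp [pathPlus])
        rw [hc] at h
        simp at h
        exact h.symm.trans (ih (by omega))
    by_cases h0 : side (f ⟨0, by omega⟩)
    · have hin : Function.Injective (fun k : Fin t =>
          (⟨(f k).val, (hall k.val k.isLt).2 h0⟩ : Fin (t - 1))) := by
        intro k l hkl
        simp only [Fin.mk.injEq] at hkl
        exact hf (Fin.ext hkl)
      have := Fintype.card_le_of_injective _ hin
      simp at this
      omega
    · have hge : ∀ k : Fin t, t - 1 ≤ (f k).val := fun k => by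
        have := (hall k.val k.isLt).not.2 h0
        simp only [side] at this
        exact not_lt.1 this
      have hin : Function.Injective (fun k : Fin t =>
          (⟨(f k).val - (t - 1), by have := (f k).isLt; have := hge k; omega⟩ : Fin (t - 1))) := by
        intro k l hkl
        simp only [Fin.mk.injEq] at hkl
        have h1 := hge k
        have h2 := hge l
        exact hf (Fin.ext (by omega))
      have := Fintype.card_le_of_injective _ hin
      simp at this
      omega

/-- For `t ≥ s ≥ 4`, every red/blue (`0`/`1`) coloring of the edges of the complete graph
on `2t - 1` vertices contains a red copy of `P_s^+` or a blue copy of `P_t^+`; together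
with the lower-bound construction, `R(P_s^+, P_t^+) = 2t - 1`. -/
theorem ramsey_pathPlus_general (s t : ℕ) (hs : 4 ≤ s) (hst : s ≤ t) :
    (∀ c : Sym2 (Fin (2 * t - 1)) → Fin 2,
      HasCopyIn c 0 (pathPlus s) ∨ HasCopyIn c 1 (pathPlus t)) ∧
    ramsey2 (pathPlus s) (pathPlus t) = 2 * t - 1 := by
  have hup : ∀ c : Sym2 (Fin (2 * t - 1)) → Fin 2,
      HasCopyIn c 0 (pathPlus s) ∨ HasCopyIn c 1 (pathPlus t) := by
    intro c
    rcases diag (fun x y => c s(x, y) = 0) (fun x y => c s(x, y) = 1)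
      (fun x y h => by rw [Sym2.eq_swap]; exact h) (fun x y h => by rw [Sym2.eq_swap]; exact h)
      (fun x y _ => by omega) (by simp; omega) t (by omega) (by simp) with h | h
    · exact Or.inl (copy_of_HasPP c 0 s (h.mono hst))
    · exact Or.inr (copy_of_HasPP c 1 t h)
  refine ⟨hup, ?_⟩
  apply le_antisymm
  · exact Nat.sInf_le hup
  · refine le_csInf ⟨_, hup⟩ ?_
    intro n hn
    by_contra hlt
    obtain ⟨c, hc⟩ := lower s t n hs hst (not_le.1 hlt)
    exact hc (hn c)
end
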